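/- Weighted total variation distance between two Gaussians: let μ₁ = N(m₁, Σ₁) and μ₂ = N(m₂, Σ₂) on R^n with Σ₁, Σ₂ symmetric positive definite. Then d_g(μ₁, μ₂) ≤ √(μ₁[g²] + μ₂[g²]) · (3‖Σ₂^{−1}Σ₁ − I_n‖_F + |m₁ − m₂|_{Σ₂}), where ‖·‖_F is the Frobenius norm and |x|_{Σ₂} = |Σ₂^{−1/2} x|. -/

import Mathlib

open MeasureTheory Matrix
open scoped BigOperators ENNReal

noncomputable section

namespace EnKF

/-- Points of `ℝ^n`, with Lebesgue measure as `volume`. -/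
abbrev Vec (n : ℕ) := Fin n → ℝ

/-- Euclidean norm of a finitely indexed real vector. -/
def enorm {ι : Type*} [Fintype ι] (v : ι → ℝ) : ℝ := Real.sqrt (∑ i, v i ^ 2)

/-- The weight function `g(v) = 1 + |v|²` on `ℝ^n`. -/
def gw {n : ℕ} (v : Vec n) : ℝ := 1 + ∑ i, v i ^ 2

/-- The weight function `g(u, y) = 1 + |u|² + |y|²` on `ℝ^d × ℝ^K`. -/
def gw2 {d K : ℕ} (p : Vec d × Vec K) : ℝ := 1 + (∑ i, p.1 i ^ 2) + (∑ j, p.2 j ^ 2)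

/-- Weighted total-variation metric with weight `G`:
`d_G(μ₁, μ₂) = sup { |μ₁[f] − μ₂[f]| : f measurable, |f| ≤ G pointwise }`. -/
def dG {E : Type*} [MeasurableSpace E] (G : E → ℝ) (μ₁ μ₂ : Measure E) : ℝ :=
  ⨆ f : {f : E → ℝ // Measurable f ∧ ∀ v, |f v| ≤ G v},
    |(∫ v, f.1 v ∂μ₁) - ∫ v, f.1 v ∂μ₂|

/-- Loewner order on symmetric matrices: `loe A B ↔ A ≼ B`. -/
def loe {ι : Type*} [Fintype ι] (A B : Matrix ι ι ℝ) : Prop := (B - A).PosSemidef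

/-- Mean vector of a measure on `ℝ^n`. -/
def mean {n : ℕ} (μ : Measure (Vec n)) : Vec n := fun i => ∫ v, v i ∂μ

/-- Covariance matrix of a measure on `ℝ^n`. -/
def cov {n : ℕ} (μ : Measure (Vec n)) : Matrix (Fin n) (Fin n) ℝ :=
  Matrix.of fun i j => ∫ v, (v i - mean μ i) * (v j - mean μ j) ∂μ

/-- Density of the Gaussian `N(m, S)` on `ℝ^n`. -/
def gaussDensity {n : ℕ} (m : Vec n) (S : Matrix (Fin n) (Fin n) ℝ) (x : Vec n) : ℝ :=
  (Real.sqrt ((2 * Real.pi) ^ n * S.det))⁻¹ *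
    Real.exp (-(1 / 2) * ((x - m) ⬝ᵥ (S⁻¹ *ᵥ (x - m))))

/-- The (nondegenerate) Gaussian measure `N(m, S)` on `ℝ^n`. -/
def gauss {n : ℕ} (m : Vec n) (S : Matrix (Fin n) (Fin n) ℝ) : Measure (Vec n) :=
  volume.withDensity fun x => ENNReal.ofReal (gaussDensity m S x)

/-- Gaussian projection `G` on `ℝ^n`: the Gaussian with the same mean and covariance. -/
def Gproj {n : ℕ} (μ : Measure (Vec n)) : Measure (Vec n) := gauss (mean μ) (cov μ)

variable {d K : ℕ}

/-- Mean of the first (state) marginal of a measure on `ℝ^d × ℝ^K`. -/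
def meanU (π : Measure (Vec d × Vec K)) : Vec d := fun i => ∫ p, p.1 i ∂π

/-- Mean of the second (data) marginal of a measure on `ℝ^d × ℝ^K`. -/
def meanY (π : Measure (Vec d × Vec K)) : Vec K := fun j => ∫ p, p.2 j ∂π

/-- Block `C^{uu}` of the covariance of a measure on `ℝ^d × ℝ^K`. -/
def covUU (π : Measure (Vec d × Vec K)) : Matrix (Fin d) (Fin d) ℝ :=
  Matrix.of fun i j => ∫ p, (p.1 i - meanU π i) * (p.1 j - meanU π j) ∂π

/-- Block `C^{uy}` of the covariance of a measure on `ℝ^d × ℝ^K`. -/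
def covUY (π : Measure (Vec d × Vec K)) : Matrix (Fin d) (Fin K) ℝ :=
  Matrix.of fun i j => ∫ p, (p.1 i - meanU π i) * (p.2 j - meanY π j) ∂π

/-- Block `C^{yy}` of the covariance of a measure on `ℝ^d × ℝ^K`. -/
def covYY (π : Measure (Vec d × Vec K)) : Matrix (Fin K) (Fin K) ℝ :=
  Matrix.of fun i j => ∫ p, (p.2 i - meanY π i) * (p.2 j - meanY π j) ∂π

/-- Full covariance matrix of a measure on `ℝ^d × ℝ^K`, in block form. -/
def covBlock (π : Measure (Vec d × Vec K)) : Matrix (Fin d ⊕ Fin K) (Fin d ⊕ Fin K) ℝ :=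
  Matrix.fromBlocks (covUU π) (covUY π) (covUY π)ᵀ (covYY π)

/-- Density of a Gaussian on `ℝ^d × ℝ^K` with mean `(mu, my)` and covariance `S`. -/
def jointGaussDensity (mu : Vec d) (my : Vec K)
    (S : Matrix (Fin d ⊕ Fin K) (Fin d ⊕ Fin K) ℝ) (p : Vec d × Vec K) : ℝ :=
  (Real.sqrt ((2 * Real.pi) ^ (d + K) * S.det))⁻¹ *
    Real.exp (-(1 / 2) *
      (Sum.elim (p.1 - mu) (p.2 - my) ⬝ᵥ (S⁻¹ *ᵥ Sum.elim (p.1 - mu) (p.2 - my))))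

/-- Gaussian measure on `ℝ^d × ℝ^K` with mean `(mu, my)` and covariance `S`. -/
def jointGauss (mu : Vec d) (my : Vec K)
    (S : Matrix (Fin d ⊕ Fin K) (Fin d ⊕ Fin K) ℝ) : Measure (Vec d × Vec K) :=
  volume.withDensity fun p => ENNReal.ofReal (jointGaussDensity mu my S p)

/-- Density of the Gaussian projection of a measure on `ℝ^d × ℝ^K`. -/
def gProjDensity2 (π : Measure (Vec d × Vec K)) : Vec d × Vec K → ℝ :=
  jointGaussDensity (meanU π) (meanY π) (covBlock π)

/-- Gaussian projection on `ℝ^d × ℝ^K`. -/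
def Gproj2 (π : Measure (Vec d × Vec K)) : Measure (Vec d × Vec K) :=
  jointGauss (meanU π) (meanY π) (covBlock π)

/-- Prediction operator `P`: the law of `Ψ(V) + ξ`, `V ∼ μ` independent of `ξ ∼ N(0, Σ)`. -/
def Pop (Psi : Vec d → Vec d) (Sig : Matrix (Fin d) (Fin d) ℝ)
    (μ : Measure (Vec d)) : Measure (Vec d) :=
  (μ.prod (gauss 0 Sig)).map fun p => Psi p.1 + p.2

/-- Lifting operator `Q`: the law of `(U, H(U) + η)`, `U ∼ μ` independent of `η ∼ N(0, Γ)`. -/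
def Qop (H : Vec d → Vec K) (Gam : Matrix (Fin K) (Fin K) ℝ)
    (μ : Measure (Vec d)) : Measure (Vec d × Vec K) :=
  (μ.prod (gauss 0 Gam)).map fun p => (p.1, H p.1 + p.2)

/-- Lebesgue density of `Pμ`. -/
def predDensity (Psi : Vec d → Vec d) (Sig : Matrix (Fin d) (Fin d) ℝ)
    (μ : Measure (Vec d)) (u : Vec d) : ℝ :=
  (Real.sqrt ((2 * Real.pi) ^ d * Sig.det))⁻¹ *
    ∫ v, Real.exp (-(1 / 2) * ((u - Psi v) ⬝ᵥ (Sig⁻¹ *ᵥ (u - Psi v)))) ∂μ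

/-- Lebesgue density of `QPμ` on `ℝ^d × ℝ^K`. -/
def qpDensity (Psi : Vec d → Vec d) (Sig : Matrix (Fin d) (Fin d) ℝ)
    (H : Vec d → Vec K) (Gam : Matrix (Fin K) (Fin K) ℝ)
    (μ : Measure (Vec d)) (p : Vec d × Vec K) : ℝ :=
  predDensity Psi Sig μ p.1 * gaussDensity (H p.1) Gam p.2

/-- Conditioning operator `B` applied to a (joint) density `f` and a datum `y†`:
the measure on `ℝ^d` with density `u ↦ f(u, y†) / ∫ f(U, y†) dU`. -/
def condM (f : Vec d × Vec K → ℝ) (ydag : Vec K) : Measure (Vec d) :=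
  volume.withDensity fun u => ENNReal.ofReal (f (u, ydag) / ∫ U, f (U, ydag))

/-- Kalman transport operator `T`: the pushforward of `π` under
`(u, y) ↦ u + C^{uy}(π) C^{yy}(π)⁻¹ (y† − y)`. -/
def Top (ydag : Vec K) (π : Measure (Vec d × Vec K)) : Measure (Vec d) :=
  π.map fun p => p.1 + covUY π *ᵥ ((covYY π)⁻¹ *ᵥ (ydag - p.2))

/-- Operator (spectral) norm of a real matrix. -/
def opNorm {ι : Type*} [Fintype ι] {κ : Type*} [Fintype κ] (A : Matrix ι κ ℝ) : ℝ :=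
  ⨆ x : {x : κ → ℝ // ∑ i, x i ^ 2 ≤ 1}, enorm (A *ᵥ x.1)

/-- Frobenius norm of a real matrix. -/
def frobNorm {ι κ : Type*} [Fintype ι] [Fintype κ] (A : Matrix ι κ ℝ) : ℝ :=
  Real.sqrt (∑ i, ∑ j, A i j ^ 2)

/-- Weighted norm `|x|_S = |S^{-1/2} x|`, i.e. `√(xᵀ S⁻¹ x)`. -/
def wnorm {n : ℕ} (S : Matrix (Fin n) (Fin n) ℝ) (x : Vec n) : ℝ :=
  Real.sqrt (x ⬝ᵥ (S⁻¹ *ᵥ x))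

/-- The set `𝒫_R(ℝ^n)` of probability measures with `|M(μ)| ≤ R` and
`R⁻² I ≼ C(μ) ≼ R² I`. -/
def PR (n : ℕ) (R : ℝ) : Set (Measure (Vec n)) :=
  {μ | IsProbabilityMeasure μ ∧ enorm (mean μ) ≤ R ∧
    loe ((R ^ 2)⁻¹ • 1) (cov μ) ∧ loe (cov μ) (R ^ 2 • 1)}

/-- The set `𝒫_R(ℝ^d × ℝ^K)`. -/
def PR2 (d K : ℕ) (R : ℝ) : Set (Measure (Vec d × Vec K)) :=
  {π | IsProbabilityMeasure π ∧ enorm (Sum.elim (meanU π) (meanY π)) ≤ R ∧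
    loe ((R ^ 2)⁻¹ • 1) (covBlock π) ∧ loe (covBlock π) (R ^ 2 • 1)}

/-- Smallest eigenvalue of a symmetric matrix (Rayleigh quotient form). -/
def lambdaMin {ι : Type*} [Fintype ι] (A : Matrix ι ι ℝ) : ℝ :=
  ⨅ x : {x : ι → ℝ // ∑ i, x i ^ 2 = 1}, x.1 ⬝ᵥ (A *ᵥ x.1)

/-- Kullback–Leibler divergence `KL(μ₁ ‖ μ₂) = ∫ (dμ₁/dμ₂) log (dμ₁/dμ₂) dμ₂`. -/
def kl {E : Type*} [MeasurableSpace E] (μ₁ μ₂ : Measure E) : ℝ :=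
  ∫ v, ((μ₁.rnDeriv μ₂ v).toReal * Real.log (μ₁.rnDeriv μ₂ v).toReal) ∂μ₂


open ProbabilityTheory

lemma pi_gaussianReal_eq_withDensity (n : ℕ) :
    Measure.pi (fun _ : Fin n => gaussianReal 0 1) =
      volume.withDensity fun z : Vec n => ENNReal.ofReal (∏ i, gaussianPDFReal 0 1 (z i)) := by
  refine Measure.pi_eq fun s hs => ?_
  rw [withDensity_apply _ (MeasurableSet.univ_pi hs), volume_pi, Measure.restrict_pi_pi,
    ← ofReal_integral_eq_lintegral_ofReal, integral_fintype_prod_eq_prod,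
    ENNReal.ofReal_prod_of_nonneg]
  · refine Finset.prod_congr rfl fun i _ => ?_
    rw [gaussianReal_apply_eq_integral _ one_ne_zero]
  · exact fun i _ => integral_nonneg fun x => gaussianPDFReal_nonneg _ _ _
  · exact Integrable.fintype_prod fun i => (integrable_gaussianPDFReal 0 1).restrict
  · exact Filter.Eventually.of_forall fun z =>
      Finset.prod_nonneg fun i _ => gaussianPDFReal_nonneg _ _ _

lemma prod_gaussianPDFReal (n : ℕ) (z : Vec n) :
    ∏ i, gaussianPDFReal 0 1 (z i) =
      (Real.sqrt ((2 * Real.pi) ^ n))⁻¹ * Real.exp (-(1 / 2) * (z ⬝ᵥ z)) := by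
  simp only [gaussianPDFReal, Finset.prod_mul_distrib, ← Real.exp_sum]
  congr 1
  · rw [Finset.prod_const, inv_pow, Finset.card_univ, Fintype.card_fin, Real.sqrt_eq_rpow,
      Real.sqrt_eq_rpow, ← Real.rpow_natCast, ← Real.rpow_natCast, ← Real.rpow_mul (by positivity),
      ← Real.rpow_mul (by positivity)]
    simp [mul_comm]
  · congr 1
    rw [dotProduct, Finset.mul_sum]
    exact Finset.sum_congr rfl fun i _ => by simp; ring

lemma gaussDensity_affine {n : ℕ} (m : Vec n) {R : Matrix (Fin n) (Fin n) ℝ} (hR : R.det ≠ 0)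
    (z : Vec n) :
    ∏ i, gaussianPDFReal 0 1 (z i) = |R.det| * gaussDensity m (R * Rᵀ) (m + R *ᵥ z) := by
  have hq : (R *ᵥ z) ⬝ᵥ ((R * Rᵀ)⁻¹ *ᵥ (R *ᵥ z)) = z ⬝ᵥ z := by
    rw [Matrix.mul_inv_rev, mulVec_mulVec, Matrix.mul_assoc, nonsing_inv_mul _ hR.isUnit,
      Matrix.mul_one, dotProduct_mulVec, ← vecMul_transpose, vecMul_vecMul,
      mul_nonsing_inv _ (by simpa using hR), vecMul_one]
  rw [prod_gaussianPDFReal, gaussDensity, add_sub_cancel_left, hq, det_mul, det_transpose,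
    Real.sqrt_mul (by positivity), Real.sqrt_mul_self_eq_abs, mul_inv]
  have := abs_ne_zero.2 hR
  field_simp

lemma measurable_gaussDensity {n : ℕ} (m : Vec n) (S : Matrix (Fin n) (Fin n) ℝ) :
    Measurable (gaussDensity m S) := by
  unfold gaussDensity
  refine Continuous.measurable ?_
  fun_prop

lemma gauss_eq_map {n : ℕ} (m : Vec n) {R : Matrix (Fin n) (Fin n) ℝ} (hR : R.det ≠ 0) :
    gauss m (R * Rᵀ) =
      (Measure.pi fun _ : Fin n => gaussianReal 0 1).map fun z => m + R *ᵥ z := by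
  have hT : Measurable fun z : Vec n => m + R *ᵥ z := by
    refine Continuous.measurable ?_
    fun_prop
  have hvol : (volume : Measure (Vec n)) =
      ENNReal.ofReal |R.det| • volume.map fun z : Vec n => m + R *ᵥ z := by
    have h1 : (volume : Measure (Vec n)).map (fun z : Vec n => m + R *ᵥ z) =
        ENNReal.ofReal |R.det⁻¹| • volume := by
      have h2 := Real.map_matrix_volume_pi_eq_smul_volume_pi hR
      have h3 : (fun z : Vec n => m + R *ᵥ z) = (fun x => m + x) ∘ toLin' R := by
        ext; simp
      rw [h3, ← Measure.map_map (by fun_prop) (by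
        exact (LinearMap.continuous_on_pi _).measurable), h2, Measure.map_smul,
        map_add_left_eq_self]
    rw [h1, smul_smul, ← ENNReal.ofReal_mul (abs_nonneg _), ← abs_mul, mul_inv_cancel₀ hR]
    simp
  have hp := (measurable_gaussDensity m (R * Rᵀ)).ennreal_ofReal
  ext s hs
  rw [Measure.map_apply hT hs, pi_gaussianReal_eq_withDensity, gauss, withDensity_apply _ hs,
    withDensity_apply _ (hT hs), hvol, Measure.restrict_smul, lintegral_smul_measure,
    setLIntegral_map hs hp hT, ← hvol, smul_eq_mul, ← lintegral_const_mul' _ _ ENNReal.ofReal_ne_top]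
  refine lintegral_congr fun z => ?_
  rw [gaussDensity_affine m hR, ENNReal.ofReal_mul (abs_nonneg _)]

lemma exists_mul_transpose_of_posDef {n : ℕ} {S : Matrix (Fin n) (Fin n) ℝ} (hS : S.PosDef) :
    ∃ R : Matrix (Fin n) (Fin n) ℝ, R.det ≠ 0 ∧ S = R * Rᵀ := by
  open scoped MatrixOrder in
  obtain ⟨B, hB⟩ := CStarAlgebra.nonneg_iff_eq_star_mul_self.1 hS.posSemidef.nonneg
  rw [star_eq_conjTranspose, conjTranspose_eq_transpose_of_trivial] at hB
  refine ⟨Bᵀ, fun h => hS.det_pos.ne' ?_, by simpa using hB⟩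
  rw [hB, det_mul, h, zero_mul]

instance isGaussian_pi_gaussianReal (n : ℕ) :
    IsGaussian (Measure.pi fun _ : Fin n => gaussianReal 0 1) := by
  have h : Measure.pi (fun _ : Fin n => gaussianReal 0 1) =
      (stdGaussian (EuclideanSpace ℝ (Fin n))).map
        (EuclideanSpace.equiv (Fin n) ℝ) := by
    rw [← map_pi_eq_stdGaussian, Measure.map_map (by fun_prop) (by fun_prop)]
    exact Measure.map_id.symm
  rw [h]
  infer_instance

lemma isGaussian_gauss {n : ℕ} (m : Vec n) {S : Matrix (Fin n) (Fin n) ℝ} (hS : S.PosDef) :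
    IsGaussian (gauss m S) := by
  obtain ⟨R, hR, rfl⟩ := exists_mul_transpose_of_posDef hS
  have h : (fun z : Vec n => m + R *ᵥ z) =
      (fun x => m + x) ∘ (LinearMap.toContinuousLinearMap (toLin' R)) := by
    ext; simp
  rw [gauss_eq_map m hR, h, ← Measure.map_map (by fun_prop) (by fun_prop)]
  infer_instance

lemma memLp_eval_gaussian {n : ℕ} (μ : Measure (Vec n)) [IsGaussian μ] (i : Fin n) :
    MemLp (fun x : Vec n => x i) 2 μ :=
  (ContinuousLinearMap.proj (R := ℝ) (φ := fun _ : Fin n => ℝ) i).comp_memLp'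
    (IsGaussian.memLp_two_id (μ := μ))

lemma integral_mul_pi_gaussianReal {n : ℕ} (i j : Fin n) :
    ∫ z : Vec n, z i * z j ∂(Measure.pi fun _ => gaussianReal 0 1) = if i = j then 1 else 0 := by
  split_ifs with h
  · subst h
    rw [integral_comp_eval (μ := fun _ : Fin n => gaussianReal 0 1) (i := i)
      (f := fun x : ℝ => x * x) (by fun_prop)]
    have h := variance_fun_id_gaussianReal (μ := 0) (v := 1)
    rw [variance_eq_integral (by fun_prop)] at h
    simpa [sq] using h
  · have hind := iIndepFun_pi (μ := fun _ : Fin n => gaussianReal 0 1)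
      (X := fun _ x => x) (fun _ => by fun_prop)
    have := (hind.indepFun h).integral_fun_mul_eq_mul_integral
      (measurable_pi_apply i).aestronglyMeasurable (measurable_pi_apply j).aestronglyMeasurable
    rw [this, integral_eval]
    simp

lemma integral_mul_gauss {n : ℕ} (m a : Vec n) {S : Matrix (Fin n) (Fin n) ℝ} (hS : S.PosDef)
    (i j : Fin n) :
    ∫ x, (x - a) i * (x - a) j ∂gauss m S = S i j + (m - a) i * (m - a) j := by
  obtain ⟨R, hR, rfl⟩ := exists_mul_transpose_of_posDef hS
  rw [gauss_eq_map m hR, integral_map (by fun_prop) (by fun_prop)]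
  set μ := Measure.pi fun _ : Fin n => gaussianReal 0 1
  have hL (k : Fin n) : MemLp (fun z : Vec n => (R *ᵥ z) k) 2 μ := by
    simp only [mulVec, dotProduct]
    exact memLp_finsetSum _ fun l _ => (memLp_eval_gaussian μ l).const_mul _
  have hz (k : Fin n) : ∫ z : Vec n, (R *ᵥ z) k ∂μ = 0 := by
    simp only [mulVec, dotProduct]
    rw [integral_finsetSum _ fun l _ =>
      ((memLp_eval_gaussian μ l).integrable one_le_two).const_mul _]
    simp [integral_const_mul, μ, integral_eval]
  have hzz : ∫ z : Vec n, (R *ᵥ z) i * (R *ᵥ z) j ∂μ = (R * Rᵀ) i j := by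
    have hint (k l : Fin n) : Integrable (fun z : Vec n => R i k * R j l * (z k * z l)) μ :=
      ((memLp_eval_gaussian μ k).integrable_mul (memLp_eval_gaussian μ l)).const_mul _
    have (z : Vec n) : (R *ᵥ z) i * (R *ᵥ z) j = ∑ k, ∑ l, R i k * R j l * (z k * z l) := by
      simp only [mulVec, dotProduct, Finset.sum_mul_sum]
      exact Finset.sum_congr rfl fun k _ => Finset.sum_congr rfl fun l _ => by ring
    simp_rw [this]
    rw [integral_finsetSum _ fun k _ => integrable_finsetSum _ fun l _ => hint k l]
    simp_rw [integral_finsetSum _ fun l _ => hint _ l, integral_const_mul, μ,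
      integral_mul_pi_gaussianReal]
    simp [mul_apply]
  have hexp (z : Vec n) : (m + R *ᵥ z - a) i * (m + R *ᵥ z - a) j =
      (R *ᵥ z) i * (R *ᵥ z) j + ((m - a) i * (R *ᵥ z) j + (m - a) j * (R *ᵥ z) i) +
        (m - a) i * (m - a) j := by
    simp only [Pi.add_apply, Pi.sub_apply]
    ring
  have hint (k : Fin n) := (hL k).integrable one_le_two
  have hlin : Integrable (fun z : Vec n =>
      (m - a) i * (R *ᵥ z) j + (m - a) j * (R *ᵥ z) i) μ := ((hint j).const_mul ((m - a) i)).add ((hint i).const_mul ((m - a) j))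
  have hsq : Integrable (fun z : Vec n => (R *ᵥ z) i * (R *ᵥ z) j) μ := (hL i).integrable_mul (hL j)
  simp_rw [hexp]
  rw [integral_add (hsq.fun_add hlin) (integrable_const _), integral_add hsq hlin,
    integral_add ((hint j).const_mul _) ((hint i).const_mul _)]
  simp [integral_const_mul, hz, hzz]

lemma dotProduct_mulVec_eq_sum {n : ℕ} (Q : Matrix (Fin n) (Fin n) ℝ) (x : Vec n) :
    x ⬝ᵥ (Q *ᵥ x) = ∑ i, ∑ j, Q i j * (x i * x j) := by
  simp only [mulVec, dotProduct, Finset.mul_sum]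
  exact Finset.sum_congr rfl fun i _ => Finset.sum_congr rfl fun j _ => by ring

lemma integrable_quadratic_gauss {n : ℕ} (m a : Vec n) {S : Matrix (Fin n) (Fin n) ℝ}
    (hS : S.PosDef) (i j : Fin n) :
    Integrable (fun x => (x - a) i * (x - a) j) (gauss m S) := by
  have := isGaussian_gauss m hS
  have h (k : Fin n) : MemLp (fun x : Vec n => (x - a) k) 2 (gauss m S) :=
    (memLp_eval_gaussian _ k).sub (memLp_const (a k))
  exact (h i).integrable_mul (h j)

lemma integrable_quadForm_gauss {n : ℕ} (m a : Vec n) {S : Matrix (Fin n) (Fin n) ℝ}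
    (hS : S.PosDef) (Q : Matrix (Fin n) (Fin n) ℝ) :
    Integrable (fun x => (x - a) ⬝ᵥ (Q *ᵥ (x - a))) (gauss m S) := by
  simp_rw [dotProduct_mulVec_eq_sum]
  exact integrable_finsetSum _ fun i _ => integrable_finsetSum _ fun j _ =>
    (integrable_quadratic_gauss m a hS i j).const_mul _

lemma integral_quadForm_gauss {n : ℕ} (m a : Vec n) {S : Matrix (Fin n) (Fin n) ℝ}
    (hS : S.PosDef) (Q : Matrix (Fin n) (Fin n) ℝ) :
    ∫ x, (x - a) ⬝ᵥ (Q *ᵥ (x - a)) ∂gauss m S =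
      trace (Q * S) + (m - a) ⬝ᵥ (Q *ᵥ (m - a)) := by
  have hint (i j : Fin n) := (integrable_quadratic_gauss m a hS i j).const_mul (Q i j)
  have hsymm (i j : Fin n) : S j i = S i j := by
    simpa using hS.isHermitian.apply i j
  simp_rw [dotProduct_mulVec_eq_sum]
  rw [integral_finsetSum _ fun i _ => integrable_finsetSum _ fun j _ => hint i j]
  simp_rw [integral_finsetSum _ fun j _ => hint _ j, integral_const_mul,
    integral_mul_gauss m a hS, mul_add, Finset.sum_add_distrib]
  simp [trace, mul_apply, hsymm]

lemma continuous_gw {n : ℕ} : Continuous (gw (n := n)) := by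
  unfold gw
  fun_prop

lemma integrable_gw_sq_gauss {n : ℕ} (m : Vec n) {S : Matrix (Fin n) (Fin n) ℝ}
    (hS : S.PosDef) : Integrable (fun x => gw x ^ 2) (gauss m S) := by
  have := isGaussian_gauss m hS
  have hnorm : MemLp (fun x : Vec n => ‖x‖ ^ 2) 2 (gauss m S) := by
    rw [memLp_two_iff_integrable_sq (by fun_prop)]
    have h := (IsGaussian.memLp_id (gauss m S) (4 : ℕ) (by simp)).integrable_norm_pow'
    simpa only [← pow_mul, id_eq] using h
  have hbound : MemLp (fun x : Vec n => 1 + (n : ℝ) * ‖x‖ ^ 2) 2 (gauss m S) :=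
    (memLp_const (1 : ℝ)).add (hnorm.const_mul (n : ℝ))
  refine (hbound.mono continuous_gw.aestronglyMeasurable
    (Filter.Eventually.of_forall fun x => ?_)).integrable_sq
  have h1 : ∑ i, x i ^ 2 ≤ n * ‖x‖ ^ 2 := by
    calc ∑ i, x i ^ 2 ≤ ∑ _i : Fin n, ‖x‖ ^ 2 := Finset.sum_le_sum fun i _ => by
          rw [← sq_abs]
          exact pow_le_pow_left₀ (abs_nonneg _) (norm_le_pi_norm x i) 2
      _ = n * ‖x‖ ^ 2 := by simp
  have h0 : 0 ≤ ∑ i, x i ^ 2 := Finset.sum_nonneg fun i _ => sq_nonneg _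
  rw [gw, Real.norm_of_nonneg (by positivity), Real.norm_of_nonneg (by positivity)]
  linarith

lemma trace_mul_self_eq_sum_sq_eigenvalues {n : ℕ} {C : Matrix (Fin n) (Fin n) ℝ}
    (hC : C.IsHermitian) : trace (C * C) = ∑ i, hC.eigenvalues i ^ 2 := by
  conv_lhs => rw [hC.spectral_theorem, ← map_mul, Unitary.conjStarAlgAut_apply, trace_mul_comm,
    ← mul_assoc]
  simp [sq]

lemma trace_mul_self_le_frobNorm_sq {n : ℕ} (B : Matrix (Fin n) (Fin n) ℝ) :
    trace (B * B) ≤ frobNorm B ^ 2 := by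
  have hsum : ∑ i, ∑ j, B j i ^ 2 = ∑ i, ∑ j, B i j ^ 2 := Finset.sum_comm
  have h : ∑ i, ∑ j, 2 * (B i j * B j i) ≤ ∑ i, ∑ j, (B i j ^ 2 + B j i ^ 2) :=
    Finset.sum_le_sum fun i _ => Finset.sum_le_sum fun j _ => by
      linarith [two_mul_le_add_sq (B i j) (B j i)]
  rw [frobNorm, Real.sq_sqrt (by positivity)]
  simp only [Finset.sum_add_distrib, ← Finset.mul_sum, hsum] at h
  simp only [trace, diag_apply, mul_apply]
  linarith

lemma sub_one_sub_log_le {x : ℝ} (hx : 1 / 3 ≤ x) : x - 1 - Real.log x ≤ 3 * (x - 1) ^ 2 := by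
  have hx0 : 0 < x := by linarith
  have hlog := Real.one_sub_inv_le_log_of_pos hx0
  have hinv : x⁻¹ ≤ 3 := inv_le_of_inv_le₀ (by norm_num) (by linarith)
  have h : x - 1 - (1 - x⁻¹) = (x - 1) ^ 2 * x⁻¹ := by
    field_simp
  nlinarith [sq_nonneg (x - 1)]

/-- For small relative covariance error, twice the Kullback–Leibler divergence of the centred
Gaussians is controlled by the squared Frobenius norm. -/
lemma trace_sub_log_det_le {n : ℕ} {S₁ S₂ : Matrix (Fin n) (Fin n) ℝ}
    (hS₁ : S₁.PosDef) (hS₂ : S₂.PosDef) (hF : frobNorm (S₂⁻¹ * S₁ - 1) ≤ 2 / 3) :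
    trace (S₂⁻¹ * S₁) - n - (Real.log S₁.det - Real.log S₂.det) ≤
      3 * frobNorm (S₂⁻¹ * S₁ - 1) ^ 2 := by
  obtain ⟨R, hR, hS₂R⟩ := exists_mul_transpose_of_posDef hS₂
  set A := S₂⁻¹ * S₁ with hA
  set C := R⁻¹ * S₁ * (R⁻¹)ᵀ with hCdef
  have hinv : S₂⁻¹ = (R⁻¹)ᵀ * R⁻¹ := by
    rw [hS₂R, Matrix.mul_inv_rev, transpose_nonsing_inv]
  have hRinv : IsUnit R⁻¹ := (isUnit_nonsing_inv_iff).2 ((isUnit_iff_isUnit_det R).2 hR.isUnit)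
  have hC : C.PosDef := by
    have := hS₁.mul_mul_conjTranspose_same (vecMul_injective_of_isUnit hRinv)
    rwa [conjTranspose_eq_transpose_of_trivial] at this
  have htr : trace C = trace A := by
    rw [hCdef, trace_mul_comm, ← Matrix.mul_assoc, ← hinv]
  have htr2 : trace (C * C) = trace (A * A) := by
    rw [hA, hinv, show C * C = (R⁻¹ * S₁ * (R⁻¹)ᵀ * R⁻¹ * S₁) * (R⁻¹)ᵀ by
      simp only [hCdef, Matrix.mul_assoc], trace_mul_comm]
    simp only [Matrix.mul_assoc]
  have hdet : C.det = S₁.det / S₂.det := by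
    rw [hCdef, hS₂R, det_mul, det_mul, det_transpose, det_nonsing_inv, det_mul, det_transpose,
      Ring.inverse_eq_inv]
    field_simp
  set lam := hC.isHermitian.eigenvalues with hlam
  have hpos (i : Fin n) : 0 < lam i := hC.eigenvalues_pos i
  have hsum : ∑ i, lam i = trace A := by
    rw [← htr, hC.isHermitian.trace_eq_sum_eigenvalues]
    simp [hlam]
  have hsumsq : ∑ i, (lam i - 1) ^ 2 ≤ frobNorm (A - 1) ^ 2 := by
    refine le_trans (le_of_eq ?_) (trace_mul_self_le_frobNorm_sq (A - 1))
    have h1 : (A - 1) * (A - 1) = A * A - 2 • A + 1 := by noncomm_ring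
    rw [h1, trace_add, trace_sub, trace_smul, ← htr2, ← hsum, trace_one,
      trace_mul_self_eq_sum_sq_eigenvalues hC.isHermitian]
    simp only [sub_sq, Finset.sum_add_distrib, Finset.sum_sub_distrib, ← Finset.mul_sum,
      ← Finset.sum_mul]
    simp [hlam]
  have hlog : Real.log S₁.det - Real.log S₂.det = ∑ i, Real.log (lam i) := by
    rw [← Real.log_div hS₁.det_pos.ne' hS₂.det_pos.ne', ← hdet,
      hC.isHermitian.det_eq_prod_eigenvalues, ← Real.log_prod fun i _ => (hpos i).ne']
    simp [hlam]
  have hlow (i : Fin n) : 1 / 3 ≤ lam i := by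
    have h1 : (lam i - 1) ^ 2 ≤ ∑ i, (lam i - 1) ^ 2 :=
      Finset.single_le_sum (f := fun i => (lam i - 1) ^ 2) (fun i _ => sq_nonneg _)
        (Finset.mem_univ i)
    have h2 : frobNorm (A - 1) ^ 2 ≤ (2 / 3) ^ 2 :=
      pow_le_pow_left₀ (Real.sqrt_nonneg _) hF 2
    have h3 := abs_le_of_sq_le_sq' (h1.trans (hsumsq.trans h2)) (by norm_num)
    linarith [h3.1]
  calc trace A - n - (Real.log S₁.det - Real.log S₂.det)
      = ∑ i, (lam i - 1 - Real.log (lam i)) := by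
        rw [hlog, ← hsum]
        simp [Finset.sum_sub_distrib]
    _ ≤ ∑ i, 3 * (lam i - 1) ^ 2 := Finset.sum_le_sum fun i _ => sub_one_sub_log_le (hlow i)
    _ ≤ 3 * frobNorm (A - 1) ^ 2 := by
        rw [← Finset.mul_sum]
        linarith

lemma integral_mul_le_sqrt_mul_sqrt {α : Type*} [MeasurableSpace α] {ν : Measure α} {f g : α → ℝ}
    (hf : MemLp f 2 ν) (hg : MemLp g 2 ν) (hf0 : ∀ x, 0 ≤ f x) (hg0 : ∀ x, 0 ≤ g x) :
    ∫ x, f x * g x ∂ν ≤ Real.sqrt (∫ x, f x ^ 2 ∂ν) * Real.sqrt (∫ x, g x ^ 2 ∂ν) := by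
  have h := integral_mul_le_Lp_mul_Lq_of_nonneg Real.HolderConjugate.two_two
    (Filter.Eventually.of_forall hf0) (Filter.Eventually.of_forall hg0)
    (by simpa using hf) (by simpa using hg)
  simpa [Real.sqrt_eq_rpow] using h

/-- Cauchy–Schwarz bound of a weighted total variation by the Hellinger distance. -/
lemma integral_weight_mul_abs_sub_le {α : Type*} [MeasurableSpace α] {ν : Measure α}
    {G p q : α → ℝ} (hG : Measurable G) (hp : Measurable p) (hq : Measurable q)
    (hG0 : ∀ x, 0 ≤ G x) (hp0 : ∀ x, 0 ≤ p x) (hq0 : ∀ x, 0 ≤ q x)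
    (hpi : Integrable p ν) (hqi : Integrable q ν)
    (hGp : Integrable (fun x => p x * G x ^ 2) ν) (hGq : Integrable (fun x => q x * G x ^ 2) ν)
    {B : ℝ} (hB : 0 ≤ B) (hH : ∫ x, (Real.sqrt (p x) - Real.sqrt (q x)) ^ 2 ∂ν ≤ B ^ 2 / 2) :
    ∫ x, G x * |p x - q x| ∂ν ≤
      Real.sqrt ((∫ x, p x * G x ^ 2 ∂ν) + ∫ x, q x * G x ^ 2 ∂ν) * B := by
  have hpp (x : α) := Real.sq_sqrt (hp0 x)
  have hqq (x : α) := Real.sq_sqrt (hq0 x)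
  have hf : MemLp (fun x => |Real.sqrt (p x) - Real.sqrt (q x)|) 2 ν := by
    rw [memLp_two_iff_integrable_sq (by fun_prop)]
    refine (hpi.add hqi).mono' (by fun_prop) (Filter.Eventually.of_forall fun x => ?_)
    rw [Real.norm_of_nonneg (by positivity), sq_abs, Pi.add_apply]
    nlinarith [hpp x, hqq x, mul_nonneg (Real.sqrt_nonneg (p x)) (Real.sqrt_nonneg (q x))]
  have hbound (x : α) : (G x * (Real.sqrt (p x) + Real.sqrt (q x))) ^ 2 ≤
      2 * (p x * G x ^ 2 + q x * G x ^ 2) := by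
    have h := add_sq_le (a := Real.sqrt (p x)) (b := Real.sqrt (q x))
    rw [hpp, hqq] at h
    nlinarith [mul_le_mul_of_nonneg_left h (sq_nonneg (G x))]
  have hg : MemLp (fun x => G x * (Real.sqrt (p x) + Real.sqrt (q x))) 2 ν := by
    rw [memLp_two_iff_integrable_sq (by fun_prop)]
    refine ((hGp.add hGq).const_mul 2).mono' (by fun_prop)
      (Filter.Eventually.of_forall fun x => ?_)
    rw [Real.norm_of_nonneg (by positivity)]
    exact hbound x
  have hM : ∫ x, (G x * (Real.sqrt (p x) + Real.sqrt (q x))) ^ 2 ∂ν ≤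
      2 * ((∫ x, p x * G x ^ 2 ∂ν) + ∫ x, q x * G x ^ 2 ∂ν) := by
    rw [← integral_add hGp hGq, ← integral_const_mul]
    exact integral_mono hg.integrable_sq ((hGp.add hGq).const_mul 2) hbound
  calc ∫ x, G x * |p x - q x| ∂ν
      = ∫ x, |Real.sqrt (p x) - Real.sqrt (q x)| *
          (G x * (Real.sqrt (p x) + Real.sqrt (q x))) ∂ν := by
        refine integral_congr_ae (Filter.Eventually.of_forall fun x => ?_)
        have hs : 0 ≤ Real.sqrt (p x) + Real.sqrt (q x) := by positivity
        have h : p x - q x = (Real.sqrt (p x) - Real.sqrt (q x)) *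
            (Real.sqrt (p x) + Real.sqrt (q x)) := by
          linear_combination -hpp x + hqq x
        simp only [h, abs_mul, abs_of_nonneg hs]
        ring
    _ ≤ _ := integral_mul_le_sqrt_mul_sqrt hf hg (fun x => abs_nonneg _) fun x =>
        mul_nonneg (hG0 x) (by positivity)
    _ ≤ Real.sqrt (B ^ 2 / 2) *
          Real.sqrt (2 * ((∫ x, p x * G x ^ 2 ∂ν) + ∫ x, q x * G x ^ 2 ∂ν)) := by
        simp only [sq_abs]
        gcongr
    _ = _ := by
        rw [← Real.sqrt_mul (by positivity), show ∀ M : ℝ, B ^ 2 / 2 * (2 * M) = B ^ 2 * M by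
          intro M; ring, Real.sqrt_mul (sq_nonneg B), Real.sqrt_sq hB, mul_comm]

/-- The squared Hellinger distance is at most the Kullback–Leibler divergence. -/
lemma integral_sq_sqrt_sub_sqrt_le {α : Type*} [MeasurableSpace α] {ν : Measure α}
    {p q l : α → ℝ} (hp0 : ∀ x, 0 ≤ p x) (hq0 : ∀ x, 0 ≤ q x)
    (hpi : Integrable p ν) (hqi : Integrable q ν) (hpq : ∫ x, p x ∂ν = ∫ x, q x ∂ν)
    (hl : Integrable (fun x => p x * l x) ν) (hql : ∀ x, q x = p x * Real.exp (-l x)) :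
    ∫ x, (Real.sqrt (p x) - Real.sqrt (q x)) ^ 2 ∂ν ≤ ∫ x, p x * l x ∂ν := by
  have hsub : Integrable (fun x => q x - p x) ν := hqi.sub hpi
  calc ∫ x, (Real.sqrt (p x) - Real.sqrt (q x)) ^ 2 ∂ν
      ≤ ∫ x, (q x - p x + p x * l x) ∂ν := by
        refine integral_mono_of_nonneg (Filter.Eventually.of_forall fun x => sq_nonneg _)
          (hsub.add hl) (Filter.Eventually.of_forall fun x => ?_)
        have hsq : Real.sqrt (q x) = Real.sqrt (p x) * Real.exp (-l x / 2) := by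
          rw [hql, Real.sqrt_mul (hp0 x), Real.exp_half]
        have hprod : Real.sqrt (p x) * Real.sqrt (q x) = p x * Real.exp (-l x / 2) := by
          rw [hsq, ← mul_assoc, Real.mul_self_sqrt (hp0 x)]
        have hexp := mul_le_mul_of_nonneg_left (Real.add_one_le_exp (-l x / 2)) (hp0 x)
        have := Real.sq_sqrt (hp0 x)
        have := Real.sq_sqrt (hq0 x)
        simp only
        nlinarith
    _ = ∫ x, p x * l x ∂ν := by
        rw [integral_add hsub hl, integral_sub hqi hpi, hpq]
        ring

/-- The squared Hellinger distance of two probability densities is at most two. -/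
lemma integral_sq_sqrt_sub_sqrt_le_two {α : Type*} [MeasurableSpace α] {ν : Measure α}
    {p q : α → ℝ} (hp0 : ∀ x, 0 ≤ p x) (hq0 : ∀ x, 0 ≤ q x)
    (hpi : Integrable p ν) (hqi : Integrable q ν) (hp1 : ∫ x, p x ∂ν = 1)
    (hq1 : ∫ x, q x ∂ν = 1) :
    ∫ x, (Real.sqrt (p x) - Real.sqrt (q x)) ^ 2 ∂ν ≤ 2 := by
  calc ∫ x, (Real.sqrt (p x) - Real.sqrt (q x)) ^ 2 ∂ν
      ≤ ∫ x, (p x + q x) ∂ν := by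
        refine integral_mono_of_nonneg (Filter.Eventually.of_forall fun x => sq_nonneg _)
          (hpi.add hqi) (Filter.Eventually.of_forall fun x => ?_)
        simp only
        nlinarith [Real.sq_sqrt (hp0 x), Real.sq_sqrt (hq0 x),
          mul_nonneg (Real.sqrt_nonneg (p x)) (Real.sqrt_nonneg (q x))]
    _ = 2 := by
        rw [integral_add hpi hqi, hp1, hq1]
        norm_num

lemma gaussDensity_nonneg {n : ℕ} (m : Vec n) (S : Matrix (Fin n) (Fin n) ℝ) (x : Vec n) :
    0 ≤ gaussDensity m S x := by
  unfold gaussDensity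
  positivity

lemma integral_gauss {n : ℕ} (m : Vec n) (S : Matrix (Fin n) (Fin n) ℝ) (f : Vec n → ℝ) :
    ∫ x, f x ∂gauss m S = ∫ x, gaussDensity m S x * f x := by
  rw [gauss, integral_withDensity_eq_integral_toReal_smul
    (measurable_gaussDensity m S).ennreal_ofReal (by simp)]
  simp [ENNReal.toReal_ofReal (gaussDensity_nonneg m S _)]

lemma integrable_gauss_iff {n : ℕ} (m : Vec n) (S : Matrix (Fin n) (Fin n) ℝ) (f : Vec n → ℝ) :
    Integrable f (gauss m S) ↔ Integrable fun x => gaussDensity m S x * f x := by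
  rw [gauss, integrable_withDensity_iff_integrable_smul'
    (measurable_gaussDensity m S).ennreal_ofReal (by simp)]
  simp [ENNReal.toReal_ofReal (gaussDensity_nonneg m S _)]

lemma integrable_gaussDensity {n : ℕ} (m : Vec n) {S : Matrix (Fin n) (Fin n) ℝ}
    (hS : S.PosDef) : Integrable (gaussDensity m S) := by
  have := isGaussian_gauss m hS
  simpa using (integrable_gauss_iff m S _).1 (integrable_const (1 : ℝ))

lemma integral_gaussDensity {n : ℕ} (m : Vec n) {S : Matrix (Fin n) (Fin n) ℝ}
    (hS : S.PosDef) : ∫ x, gaussDensity m S x = 1 := by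
  have := isGaussian_gauss m hS
  simpa using (integral_gauss m S fun _ => 1).symm

lemma gaussDensity_eq_exp {n : ℕ} (m : Vec n) {S : Matrix (Fin n) (Fin n) ℝ}
    (hS : S.PosDef) (x : Vec n) :
    gaussDensity m S x = Real.exp (-(1 / 2) * (Real.log ((2 * Real.pi) ^ n) + Real.log S.det) -
      1 / 2 * ((x - m) ⬝ᵥ (S⁻¹ *ᵥ (x - m)))) := by
  have hdet := hS.det_pos
  have hc : 0 < (2 * Real.pi) ^ n * S.det := by positivity
  rw [gaussDensity, ← Real.log_mul (by positivity) hdet.ne',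
    ← Real.exp_log (inv_pos.2 (Real.sqrt_pos.2 hc)), Real.log_inv, Real.log_sqrt hc.le,
    ← Real.exp_add]
  congr 1
  ring

/-- The squared Hellinger distance of two Gaussians is at most their Kullback–Leibler
divergence, in closed form. -/
lemma integral_sq_sqrt_sub_sqrt_gaussDensity_le {n : ℕ} (m₁ m₂ : Vec n)
    {S₁ S₂ : Matrix (Fin n) (Fin n) ℝ} (hS₁ : S₁.PosDef) (hS₂ : S₂.PosDef) :
    ∫ x, (Real.sqrt (gaussDensity m₁ S₁ x) - Real.sqrt (gaussDensity m₂ S₂ x)) ^ 2 ≤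
      (trace (S₂⁻¹ * S₁) - n - (Real.log S₁.det - Real.log S₂.det) +
        wnorm S₂ (m₁ - m₂) ^ 2) / 2 := by
  have := isGaussian_gauss m₁ hS₁
  have hq₂ := (integrable_quadForm_gauss m₁ m₂ hS₁ S₂⁻¹).const_mul (1 / 2)
  have hq₁ := (integrable_quadForm_gauss m₁ m₁ hS₁ S₁⁻¹).const_mul (1 / 2)
  have hc : Integrable (fun _ : Vec n => 1 / 2 * (Real.log S₁.det - Real.log S₂.det))
    (gauss m₁ S₁) := integrable_const _
  have hsub : Integrable (fun x => 1 / 2 * ((x - m₂) ⬝ᵥ (S₂⁻¹ *ᵥ (x - m₂))) -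
      1 / 2 * ((x - m₁) ⬝ᵥ (S₁⁻¹ *ᵥ (x - m₁)))) (gauss m₁ S₁) := hq₂.sub hq₁
  have hl : Integrable (fun x => 1 / 2 * ((x - m₂) ⬝ᵥ (S₂⁻¹ *ᵥ (x - m₂))) -
      1 / 2 * ((x - m₁) ⬝ᵥ (S₁⁻¹ *ᵥ (x - m₁))) -
        1 / 2 * (Real.log S₁.det - Real.log S₂.det)) (gauss m₁ S₁) := hsub.sub hc
  refine (integral_sq_sqrt_sub_sqrt_le (gaussDensity_nonneg m₁ S₁) (gaussDensity_nonneg m₂ S₂)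
    (integrable_gaussDensity m₁ hS₁) (integrable_gaussDensity m₂ hS₂)
    (by rw [integral_gaussDensity m₁ hS₁, integral_gaussDensity m₂ hS₂])
    ((integrable_gauss_iff _ _ _).1 hl) fun x => ?_).trans
    (le_of_eq ?_)
  · rw [gaussDensity_eq_exp m₁ hS₁, gaussDensity_eq_exp m₂ hS₂, ← Real.exp_add]
    congr 1
    ring
  · have hw : wnorm S₂ (m₁ - m₂) ^ 2 = (m₁ - m₂) ⬝ᵥ (S₂⁻¹ *ᵥ (m₁ - m₂)) :=
      Real.sq_sqrt (by simpa using hS₂.inv.posSemidef.dotProduct_mulVec_nonneg (m₁ - m₂))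
    rw [← integral_gauss, integral_sub hsub hc, integral_sub hq₂ hq₁,
      integral_const_mul, integral_const_mul, integral_quadForm_gauss m₁ m₂ hS₁,
      integral_quadForm_gauss m₁ m₁ hS₁, nonsing_inv_mul _ hS₁.det_pos.ne'.isUnit, hw]
    simp
    ring

lemma gw_pos {n : ℕ} (x : Vec n) : 0 < gw x := by
  unfold gw
  positivity

lemma integrable_gw_gauss {n : ℕ} (m : Vec n) {S : Matrix (Fin n) (Fin n) ℝ}
    (hS : S.PosDef) : Integrable gw (gauss m S) := by
  have := isGaussian_gauss m hS
  have hgw : MemLp gw 2 (gauss m S) :=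
    (memLp_two_iff_integrable_sq continuous_gw.aestronglyMeasurable).2
      (integrable_gw_sq_gauss m hS)
  exact hgw.integrable one_le_two

/-- **Weighted TV distance between two Gaussians** (Lemma A.10). -/
theorem dG_gaussians
    (n : ℕ) (m₁ m₂ : Vec n) (S₁ S₂ : Matrix (Fin n) (Fin n) ℝ)
    (hS₁ : S₁.PosDef) (hS₂ : S₂.PosDef) :
    dG gw (gauss m₁ S₁) (gauss m₂ S₂) ≤
      Real.sqrt ((∫ v, gw v ^ 2 ∂(gauss m₁ S₁)) + ∫ v, gw v ^ 2 ∂(gauss m₂ S₂)) *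
        (3 * frobNorm (S₂⁻¹ * S₁ - 1) + wnorm S₂ (m₁ - m₂)) := by
  have := isGaussian_gauss m₁ hS₁
  have := isGaussian_gauss m₂ hS₂
  have hF : 0 ≤ frobNorm (S₂⁻¹ * S₁ - 1) := Real.sqrt_nonneg _
  have hw : 0 ≤ wnorm S₂ (m₁ - m₂) := Real.sqrt_nonneg _
  set F := frobNorm (S₂⁻¹ * S₁ - 1) with hFdef
  set w := wnorm S₂ (m₁ - m₂)
  set p := gaussDensity m₁ S₁
  set q := gaussDensity m₂ S₂
  have hp0 : ∀ x, 0 ≤ p x := gaussDensity_nonneg m₁ S₁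
  have hq0 : ∀ x, 0 ≤ q x := gaussDensity_nonneg m₂ S₂
  have hpm : Measurable p := measurable_gaussDensity m₁ S₁
  have hqm : Measurable q := measurable_gaussDensity m₂ S₂
  have hpi : Integrable p := integrable_gaussDensity m₁ hS₁
  have hqi : Integrable q := integrable_gaussDensity m₂ hS₂
  have hp1 : ∫ x, p x = 1 := integral_gaussDensity m₁ hS₁
  have hq1 : ∫ x, q x = 1 := integral_gaussDensity m₂ hS₂
  have hgp := integrable_gw_sq_gauss m₁ hS₁
  have hgq := integrable_gw_sq_gauss m₂ hS₂
  have hH : ∫ x, (Real.sqrt (p x) - Real.sqrt (q x)) ^ 2 ≤ (3 * F + w) ^ 2 / 2 := by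
    rcases le_total 2 (3 * F + w) with hB | hB
    · refine (integral_sq_sqrt_sub_sqrt_le_two hp0 hq0 hpi hqi hp1 hq1).trans ?_
      nlinarith
    · refine (integral_sq_sqrt_sub_sqrt_gaussDensity_le m₁ m₂ hS₁ hS₂).trans ?_
      have h := trace_sub_log_det_le hS₁ hS₂ (by linarith)
      rw [← hFdef] at h
      nlinarith [mul_nonneg hF hw]
  have hmain := integral_weight_mul_abs_sub_le continuous_gw.measurable hpm hqm
    (fun x => (gw_pos x).le) hp0 hq0 hpi hqi ((integrable_gauss_iff _ _ _).1 hgp)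
    ((integrable_gauss_iff _ _ _).1 hgq) (by positivity) hH
  rw [← integral_gauss, ← integral_gauss] at hmain
  refine Real.iSup_le (fun f => le_trans ?_ hmain) (by positivity)
  obtain ⟨f, hfm, hfg⟩ := f
  have hfi (m : Vec n) {S : Matrix (Fin n) (Fin n) ℝ} (hS : S.PosDef) :
      Integrable (fun x => gaussDensity m S x * f x) :=
    (integrable_gauss_iff _ _ _).1 <| (integrable_gw_gauss m hS).mono'
      hfm.aestronglyMeasurable (Filter.Eventually.of_forall hfg)
  have hgi (m : Vec n) {S : Matrix (Fin n) (Fin n) ℝ} (hS : S.PosDef) :=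
    (integrable_gauss_iff _ _ _).1 (integrable_gw_gauss m hS)
  rw [integral_gauss, integral_gauss, ← integral_sub (hfi m₁ hS₁) (hfi m₂ hS₂)]
  refine abs_integral_le_integral_abs.trans (integral_mono_of_nonneg
    (Filter.Eventually.of_forall fun x => abs_nonneg _) ?_
    (Filter.Eventually.of_forall fun x => ?_))
  · refine ((hgi m₁ hS₁).add (hgi m₂ hS₂)).mono'
      (continuous_gw.measurable.mul (hpm.sub hqm).abs).aestronglyMeasurable
      (Filter.Eventually.of_forall fun x => ?_)
    have hpq : |p x - q x| ≤ p x + q x :=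
      abs_le.2 ⟨by linarith [hp0 x, hq0 x], by linarith [hp0 x, hq0 x]⟩
    have hg := (gw_pos x).le
    rw [Real.norm_of_nonneg (by positivity)]
    calc gw x * |p x - q x| ≤ gw x * (p x + q x) := by gcongr
      _ = p x * gw x + q x * gw x := by ring
  · change |p x * f x - q x * f x| ≤ gw x * |p x - q x|
    rw [← sub_mul, abs_mul, mul_comm]
    exact mul_le_mul_of_nonneg_right (hfg x) (abs_nonneg _)

end EnKF
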